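/- arXiv:2010.14938 — 2 statements merged into one kernel-verified Lean document; each statement's English description precedes it below -/
import Mathlib

section
/- Let w ∈ L¹(ℝ) ∩ L²(ℝ) and let 𝓔′ : ℝ → ℝ be bounded and measurable. For f ∈ L²(Ω_D) define (A(f)h)(s,θ) := ½·∫_ℝ w(r−s)·𝓔′(½·(Rf)(r,θ))·(Rh)(r,θ) dr for h ∈ L²(Ω_D), and (B(f)g)(s,θ) := ½·𝓔′(½·(Rf)(s,θ))·∫_{−1}^{1} w(s−r)·g(r,θ) dr for g ∈ L²(Ω_S). Then for all h ∈ L²(Ω_D) and g ∈ L²(Ω_S): ⟨A(f)h, g⟩_{L²(Ω_S)} = ⟨Rh, B(f)g⟩_{L²(Ω_S)}; that is, the adjoint of the derivative operator A(f) factors as A(f)* = R* ∘ B(f). -/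
open MeasureTheory Real Set

/-- The Radon transform of `f : ℝ² → ℝ`:
`(Rf)(s,θ) = ∫_ℝ f(s·u(θ) + σ·u(θ)^⊥) dσ` with `u(θ) = (cos θ, sin θ)`,
`u(θ)^⊥ = (-sin θ, cos θ)`. -/
noncomputable def radonT (f : ℝ × ℝ → ℝ) (s θ : ℝ) : ℝ :=
  ∫ σ : ℝ, f (s * Real.cos θ - σ * Real.sin θ, s * Real.sin θ + σ * Real.cos θ)

/-- The closed unit disk `Ω_D ⊆ ℝ²`. -/
def unitDisk : Set (ℝ × ℝ) := {x : ℝ × ℝ | x.1 ^ 2 + x.2 ^ 2 ≤ 1}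

/-- The sinogram domain `Ω_S = [-1,1] × [0,2π)`. -/
def sinoDom : Set (ℝ × ℝ) := Icc (-1 : ℝ) 1 ×ˢ Ico (0 : ℝ) (2 * π)

/-- The forward operator `F(f)(s,θ) = ∫_ℝ w(r-s) · 𝓔(½ (Rf)(r,θ)) dr`. -/
noncomputable def Fop (w E : ℝ → ℝ) (f : ℝ × ℝ → ℝ) (s θ : ℝ) : ℝ :=
  ∫ r : ℝ, w (r - s) * E ((1 / 2) * radonT f r θ)

/-- The derivative operator
`(A(f)h)(s,θ) = ½ ∫_ℝ w(r-s) · 𝓔'(½ (Rf)(r,θ)) · (Rh)(r,θ) dr`. -/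
noncomputable def Aop (w E' : ℝ → ℝ) (f h : ℝ × ℝ → ℝ) (s θ : ℝ) : ℝ :=
  (1 / 2) * ∫ r : ℝ, w (r - s) * E' ((1 / 2) * radonT f r θ) * radonT h r θ

/-- The operator `(B(f)g)(s,θ) = ½ · 𝓔'(½ (Rf)(s,θ)) · ∫_{-1}^{1} w(s-r)·g(r,θ) dr`. -/
noncomputable def Bop (w E' : ℝ → ℝ) (f : ℝ × ℝ → ℝ) (g : ℝ × ℝ → ℝ) (s θ : ℝ) : ℝ :=
  (1 / 2) * E' ((1 / 2) * radonT f s θ) * ∫ r in (-1 : ℝ)..1, w (s - r) * g (r, θ)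

lemma perm_mp (ν : Measure ℝ) [SFinite ν] :
    MeasurePreserving (fun q : (ℝ × ℝ) × ℝ => ((q.1.1, q.2), q.1.2))
      ((ν.prod (volume : Measure ℝ)).prod (volume : Measure ℝ))
      ((ν.prod (volume : Measure ℝ)).prod (volume : Measure ℝ)) := by
  have h1 := measurePreserving_prodAssoc ν (volume : Measure ℝ) (volume : Measure ℝ)
  have h2 := (MeasurePreserving.id ν).prod
    (Measure.measurePreserving_swap (μ := (volume : Measure ℝ)) (ν := (volume : Measure ℝ)))
  exact (h1.symm _).comp (h2.comp h1)

lemma rot_map (θ : ℝ) :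
    Measure.map (fun p : ℝ × ℝ => (p.1 * Real.cos θ - p.2 * Real.sin θ,
      p.1 * Real.sin θ + p.2 * Real.cos θ)) (volume : Measure (ℝ × ℝ)) = volume := by
  set L := Matrix.toLin (Module.Basis.finTwoProd ℝ) (Module.Basis.finTwoProd ℝ)
    !![Real.cos θ, - Real.sin θ; Real.sin θ, Real.cos θ] with hL
  have hdet : LinearMap.det L = 1 := by
    rw [hL, LinearMap.det_toLin, Matrix.det_fin_two_of]
    nlinarith [Real.sin_sq_add_cos_sq θ]
  have h := Measure.map_linearMap_addHaar_eq_smul_addHaar (volume : Measure (ℝ × ℝ))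
    (f := L) (by rw [hdet]; norm_num)
  rw [hdet] at h
  have e : (fun p : ℝ × ℝ => (p.1 * Real.cos θ - p.2 * Real.sin θ,
      p.1 * Real.sin θ + p.2 * Real.cos θ)) = L := by
    funext p
    rw [hL, Matrix.toLin_finTwoProd_apply]
    ext <;> simp <;> ring
  rw [e, h]
  simp

lemma rot_mp (ν : Measure ℝ) [SFinite ν] :
    MeasurePreserving (fun q : (ℝ × ℝ) × ℝ =>
      (q.1.1, (q.1.2 * Real.cos q.1.1 - q.2 * Real.sin q.1.1,
        q.1.2 * Real.sin q.1.1 + q.2 * Real.cos q.1.1)))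
      ((ν.prod (volume : Measure ℝ)).prod (volume : Measure ℝ))
      (ν.prod (volume : Measure (ℝ × ℝ))) := by
  have h1 := measurePreserving_prodAssoc ν (volume : Measure ℝ) (volume : Measure ℝ)
  have h2 := (MeasurePreserving.id ν).skew_product
    (μc := (volume : Measure (ℝ × ℝ))) (μd := (volume : Measure (ℝ × ℝ)))
    (g := fun (θ : ℝ) (p : ℝ × ℝ) => (p.1 * Real.cos θ - p.2 * Real.sin θ,
      p.1 * Real.sin θ + p.2 * Real.cos θ)) (by
        unfold Function.uncurry
        fun_prop)
    (Filter.Eventually.of_forall rot_map)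
  exact h2.comp h1

lemma radon_aesm (ν : Measure ℝ) [SFinite ν] (f : ℝ × ℝ → ℝ)
    (hf : AEStronglyMeasurable f volume) :
    AEStronglyMeasurable (fun p : ℝ × ℝ => radonT f p.2 p.1) (ν.prod volume) := by
  have h1 : AEStronglyMeasurable (fun z : ℝ × (ℝ × ℝ) => f z.2) (ν.prod volume) := hf.comp_snd
  exact (h1.comp_measurePreserving (rot_mp ν)).integral_prod_right'

lemma rot_zero (f : ℝ × ℝ → ℝ) (hs : Function.support f ⊆ unitDisk) (s θ σ : ℝ)
    (h : 1 < s ^ 2 + σ ^ 2) :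
    f (s * Real.cos θ - σ * Real.sin θ, s * Real.sin θ + σ * Real.cos θ) = 0 := by
  by_contra hne
  have h1 : (s * Real.cos θ - σ * Real.sin θ) ^ 2 + (s * Real.sin θ + σ * Real.cos θ) ^ 2 ≤ 1 :=
    hs hne
  have h2 := Real.sin_sq_add_cos_sq θ
  have h3 : (s * Real.cos θ - σ * Real.sin θ) ^ 2 + (s * Real.sin θ + σ * Real.cos θ) ^ 2
      = (s ^ 2 + σ ^ 2) * (Real.sin θ ^ 2 + Real.cos θ ^ 2) := by ring
  rw [h3, h2] at h1
  linarith

lemma radon_zero (f : ℝ × ℝ → ℝ) (hs : Function.support f ⊆ unitDisk) (s θ : ℝ)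
    (h : s ∉ Icc (-1 : ℝ) 1) : radonT f s θ = 0 := by
  unfold radonT
  have : 1 < s ^ 2 := by
    by_contra h'
    exact h (abs_le.mp ((sq_le_one_iff_abs_le_one s).mp (not_lt.mp h')))
  have e : ∀ σ : ℝ, f (s * Real.cos θ - σ * Real.sin θ, s * Real.sin θ + σ * Real.cos θ) = 0 :=
    fun σ => rot_zero f hs s θ σ (by nlinarith [sq_nonneg σ])
  simp [e]

lemma cs_aux (φ : ℝ → ℝ) (hφ : ∀ x, x ∉ Icc (-1 : ℝ) 1 → φ x = 0)
    (h2 : Integrable (fun x => φ x ^ 2)) : (∫ x, φ x) ^ 2 ≤ 2 * ∫ x, φ x ^ 2 := by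
  by_cases h1 : Integrable φ
  · rw [← setIntegral_eq_integral_of_forall_compl_eq_zero (s := Icc (-1 : ℝ) 1) hφ,
      ← setIntegral_eq_integral_of_forall_compl_eq_zero (s := Icc (-1 : ℝ) 1)
        (f := fun x => φ x ^ 2) (fun x hx => by simp [hφ x hx])]
    set m := ∫ x in Icc (-1 : ℝ) 1, φ x with hm
    have hpos : 0 ≤ ∫ x in Icc (-1 : ℝ) 1, ((φ x ^ 2 - m * φ x) + m ^ 2 / 4) := by
      refine integral_nonneg fun x => ?_
      simp only [Pi.zero_apply]
      nlinarith [sq_nonneg (φ x - m / 2)]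
    have hsub : Integrable (fun x => φ x ^ 2 - m * φ x) (volume.restrict (Icc (-1 : ℝ) 1)) :=
      h2.integrableOn.sub (h1.integrableOn.const_mul m)
    rw [integral_add hsub (integrable_const _), integral_sub h2.integrableOn (h1.integrableOn.const_mul m),
      integral_const_mul, ← hm] at hpos
    simp at hpos
    nlinarith
  · rw [integral_undef h1]
    have : 0 ≤ ∫ x, φ x ^ 2 := integral_nonneg fun x => sq_nonneg _
    simpa using this

lemma radon_sq (ν : Measure ℝ) [IsFiniteMeasure ν] (f : ℝ × ℝ → ℝ)
    (hf : MemLp f 2 volume) (hs : Function.support f ⊆ unitDisk) :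
    Integrable (fun p : ℝ × ℝ => radonT f p.2 p.1 ^ 2) (ν.prod volume) := by
  have h1 : Integrable (fun z : ℝ × (ℝ × ℝ) => f z.2 ^ 2) (ν.prod volume) :=
    hf.integrable_sq.comp_snd ν
  have h2 := (rot_mp ν).integrable_comp_of_integrable h1
  refine Integrable.mono' (h2.integral_prod_left.const_mul 2)
    ((radon_aesm ν f hf.1).pow 2) ?_
  filter_upwards [h2.prod_right_ae] with p hp
  rw [Real.norm_of_nonneg (sq_nonneg _)]
  refine cs_aux _ (fun σ hσ => ?_) hp
  apply rot_zero f hs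
  have : 1 < σ ^ 2 := by
    by_contra h'
    exact hσ (abs_le.mp ((sq_le_one_iff_abs_le_one σ).mp (not_lt.mp h')))
  nlinarith [sq_nonneg p.2]

lemma shear_mp (ν : Measure ℝ) [SFinite ν] :
    MeasurePreserving (fun q : (ℝ × ℝ) × ℝ => (q.1, q.2 - q.1.2))
      ((ν.prod (volume : Measure ℝ)).prod (volume : Measure ℝ))
      ((ν.prod (volume : Measure ℝ)).prod (volume : Measure ℝ)) :=
  (MeasurePreserving.id _).skew_product (g := fun (p : ℝ × ℝ) (r : ℝ) => r - p.2)
    (by unfold Function.uncurry; fun_prop)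
    (Filter.Eventually.of_forall fun p => (measurePreserving_sub_right volume p.2).map_eq)

lemma shear_mp' (ν : Measure ℝ) [SFinite ν] :
    MeasurePreserving (fun q : (ℝ × ℝ) × ℝ => (q.1, q.1.2 - q.2))
      ((ν.prod (volume : Measure ℝ)).prod (volume : Measure ℝ))
      ((ν.prod (volume : Measure ℝ)).prod (volume : Measure ℝ)) :=
  (MeasurePreserving.id _).skew_product (g := fun (p : ℝ × ℝ) (r : ℝ) => p.2 - r)
    (by unfold Function.uncurry; fun_prop)
    (Filter.Eventually.of_forall fun p => (Measure.measurePreserving_sub_left volume p.2).map_eq)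

lemma triple_int (ν : Measure ℝ) [SFinite ν] (w : ℝ → ℝ) (hw : Integrable w)
    (K G : ℝ × ℝ → ℝ) (hK : AEStronglyMeasurable K (ν.prod volume))
    (hG : AEStronglyMeasurable G (ν.prod volume))
    (hK2 : Integrable (fun p => K p ^ 2) (ν.prod volume))
    (hG2 : Integrable (fun p => G p ^ 2) (ν.prod volume)) :
    Integrable (fun q : (ℝ × ℝ) × ℝ => w (q.2 - q.1.2) * K (q.1.1, q.2) * G q.1)
      ((ν.prod (volume : Measure ℝ)).prod (volume : Measure ℝ)) := by
  have i1 := (shear_mp ν).integrable_comp_of_integrable (hG2.mul_prod hw.norm)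
  have i2 := (perm_mp ν).integrable_comp_of_integrable
    ((shear_mp' ν).integrable_comp_of_integrable (hK2.mul_prod hw.norm))
  have m1 : AEStronglyMeasurable (fun q : (ℝ × ℝ) × ℝ => w (q.2 - q.1.2))
      ((ν.prod (volume : Measure ℝ)).prod (volume : Measure ℝ)) :=
    (hw.1.comp_snd (μ := ν.prod volume)).comp_measurePreserving (shear_mp ν)
  have m2 : AEStronglyMeasurable (fun q : (ℝ × ℝ) × ℝ => K (q.1.1, q.2))
      ((ν.prod (volume : Measure ℝ)).prod (volume : Measure ℝ)) :=
    (hK.comp_fst (ν := (volume : Measure ℝ))).comp_measurePreserving (perm_mp ν)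
  refine Integrable.mono' (i1.add i2) ((m1.mul m2).mul hG.comp_fst) ?_
  refine Filter.Eventually.of_forall fun q => ?_
  simp only [Pi.add_apply, Function.comp, norm_mul]
  have hn := norm_nonneg (w (q.2 - q.1.2))
  have a1 := sq_nonneg (‖K (q.1.1, q.2)‖ - ‖G q.1‖)
  have a2 : ‖K (q.1.1, q.2)‖ ^ 2 = K (q.1.1, q.2) ^ 2 := by simp
  have a3 : ‖G q.1‖ ^ 2 = G q.1 ^ 2 := by simp
  have a4 : ‖K (q.1.1, q.2)‖ * ‖G q.1‖ ≤ G q.1 ^ 2 + K (q.1.1, q.2) ^ 2 := by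
    nlinarith [sq_nonneg (K (q.1.1, q.2)), sq_nonneg (G q.1)]
  nlinarith [mul_le_mul_of_nonneg_left a4 hn]

lemma fubini3 (ν : Measure ℝ) [SFinite ν] (T : ℝ → ℝ → ℝ → ℝ)
    (hT : Integrable (fun q : (ℝ × ℝ) × ℝ => T q.1.1 q.1.2 q.2)
      ((ν.prod (volume : Measure ℝ)).prod (volume : Measure ℝ))) :
    ∫ s, ∫ θ, (∫ r, T θ s r) ∂ν = ∫ r, ∫ θ, (∫ s, T θ s r) ∂ν := by
  have h1 := hT.integral_prod_left
  have h2 := ((perm_mp ν).integrable_comp_of_integrable hT).integral_prod_left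
  have h3 := ((measurePreserving_prodAssoc ν (volume : Measure ℝ)
    (volume : Measure ℝ)).symm _).integrable_comp_of_integrable hT
  rw [← integral_integral_swap (f := fun θ s => ∫ r, T θ s r) h1,
    ← integral_integral_swap (f := fun θ r => ∫ s, T θ s r) h2]
  refine integral_congr_ae ?_
  filter_upwards [h3.prod_right_ae] with θ hθ
  exact integral_integral_swap hθ

/-- For `w ∈ L¹(ℝ) ∩ L²(ℝ)`, bounded measurable `𝓔'`,
`f, h ∈ L²(Ω_D)` and `g ∈ L²(Ω_S)`, the adjoint identity
`⟨A(f)h, g⟩_{L²(Ω_S)} = ⟨Rh, B(f)g⟩_{L²(Ω_S)}` holds (with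
`⟨u,v⟩ = ∫_{-1}^{1} ∫_0^{2π} u(s,θ)·v(s,θ) dθ ds`); that is, the adjoint of the
derivative operator `A(f)` factors as `A(f)* = R* ∘ B(f)`. -/
theorem Aop_adjoint_factorization (w 𝓔' : ℝ → ℝ)
    (hw1 : Integrable w) (hw2 : MemLp w 2 volume)
    (h𝓔'm : Measurable 𝓔') (h𝓔'b : ∃ M : ℝ, ∀ x : ℝ, |𝓔' x| ≤ M)
    (f h : ℝ × ℝ → ℝ)
    (hf : MemLp f 2 volume) (hfsupp : Function.support f ⊆ unitDisk)
    (hh : MemLp h 2 volume) (hhsupp : Function.support h ⊆ unitDisk)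
    (g : ℝ × ℝ → ℝ) (hg : MemLp g 2 (volume.restrict sinoDom)) :
    ∫ s in (-1 : ℝ)..1, ∫ θ in (0 : ℝ)..(2 * π), Aop w 𝓔' f h s θ * g (s, θ) =
      ∫ s in (-1 : ℝ)..1, ∫ θ in (0 : ℝ)..(2 * π), radonT h s θ * Bop w 𝓔' f g s θ := by
  obtain ⟨M, hM⟩ := h𝓔'b
  have hπ : (0 : ℝ) ≤ 2 * π := by positivity
  have hI : (volume.restrict (Ioc (0 : ℝ) (2 * π))) = volume.restrict (Ico (0 : ℝ) (2 * π)) :=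
    restrict_Ico_eq_restrict_Ioc.symm
  set ν : Measure ℝ := volume.restrict (Ico (0 : ℝ) (2 * π)) with hν
  set K : ℝ × ℝ → ℝ := fun p => 𝓔' ((1 / 2) * radonT f p.2 p.1) * radonT h p.2 p.1 with hKdef
  set G : ℝ × ℝ → ℝ := fun p => (Icc (-1 : ℝ) 1).indicator (fun s => g (s, p.1)) p.2 with hGdef
  have hG : MemLp G 2 (ν.prod volume) := by
    have e : G = (univ ×ˢ Icc (-1 : ℝ) 1).indicator (fun p => g p.swap) := by
      funext p
      simp only [hGdef, indicator, mem_prod, mem_univ, true_and, Prod.swap]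
    rw [e, memLp_indicator_iff_restrict (MeasurableSet.univ.prod measurableSet_Icc),
      ← Measure.prod_restrict, Measure.restrict_univ]
    have : volume.restrict sinoDom = (volume.restrict (Icc (-1 : ℝ) 1)).prod ν := by
      rw [hν, Measure.prod_restrict]; rfl
    rw [this] at hg
    exact hg.comp_measurePreserving Measure.measurePreserving_swap
  have hK : AEStronglyMeasurable K (ν.prod volume) :=
    (h𝓔'm.comp_aemeasurable ((radon_aesm ν f hf.1).aemeasurable.const_mul
      (1 / 2))).aestronglyMeasurable.mul (radon_aesm ν h hh.1)
  have hK2 : Integrable (fun p => K p ^ 2) (ν.prod volume) := by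
    refine Integrable.mono' ((radon_sq ν h hh hhsupp).const_mul (M ^ 2)) (hK.pow 2) ?_
    refine Filter.Eventually.of_forall fun p => ?_
    rw [Real.norm_of_nonneg (sq_nonneg _), hKdef]
    simp only [mul_pow]
    refine mul_le_mul_of_nonneg_right ?_ (sq_nonneg _)
    have := hM ((1 / 2) * radonT f p.2 p.1)
    rw [← sq_abs]
    exact pow_le_pow_left₀ (abs_nonneg _) this 2
  have hT := (triple_int ν w hw1 K G hK hG.1 hK2 hG.integrable_sq).const_mul (1 / 2)
  have key := fubini3 ν (fun θ s r => (1 / 2) * (w (r - s) * K (θ, r) * G (θ, s))) hT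
  simp only [intervalIntegral.integral_of_le hπ, hI,
    intervalIntegral.integral_of_le (show (-1 : ℝ) ≤ 1 by norm_num), Bop,
    ← integral_Icc_eq_integral_Ioc (x := (-1 : ℝ)) (y := 1)]
  have hA : ∀ s θ, ∫ r, (1 / 2) * (w (r - s) * K (θ, r) * G (θ, s)) =
      Aop w 𝓔' f h s θ * G (θ, s) := by
    intro s θ
    rw [integral_const_mul, integral_mul_const, Aop, mul_assoc]
    simp only [hKdef, mul_assoc]
  have hB : ∀ r θ, ∫ s, (1 / 2) * (w (r - s) * K (θ, r) * G (θ, s)) =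
      radonT h r θ * ((1 / 2) * 𝓔' ((1 / 2) * radonT f r θ) *
        ∫ s in Icc (-1 : ℝ) 1, w (r - s) * g (s, θ)) := by
    intro r θ
    rw [← integral_indicator measurableSet_Icc, ← mul_assoc, ← integral_const_mul]
    congr 1
    funext s
    by_cases hs : s ∈ Icc (-1 : ℝ) 1
    · simp only [hGdef, hKdef, indicator_of_mem hs]; ring
    · simp only [hGdef, hKdef, indicator_of_notMem hs]; ring
  simp only [hA, hB] at key
  rw [setIntegral_eq_integral_of_forall_compl_eq_zero (s := Icc (-1 : ℝ) 1)
    (f := fun s => ∫ θ, radonT h s θ * ((1 / 2) * 𝓔' ((1 / 2) * radonT f s θ) *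
        ∫ r in Icc (-1 : ℝ) 1, w (s - r) * g (r, θ)) ∂ν)
    (fun s hs => by simp [radon_zero h hhsupp s _ hs]), ← key,
    ← setIntegral_eq_integral_of_forall_compl_eq_zero (s := Icc (-1 : ℝ) 1)
    (f := fun s => ∫ θ, Aop w 𝓔' f h s θ * G (θ, s) ∂ν)
    (fun s hs => by simp only [hGdef, indicator_of_notMem hs, mul_zero, integral_zero])]
  refine setIntegral_congr_fun measurableSet_Icc fun s hs => ?_
  simp only [hGdef, indicator_of_mem hs]
end

section
/- For every f ∈ L²(Ω_D) (extended by zero to ℝ²), the Radon transform Rf belongs to L²(Ω_S) and satisfies ‖Rf‖_{L²(Ω_S)} ≤ 2√π · ‖f‖_{L²(Ω_D)}; hence R : L²(Ω_D) → L²(Ω_S) is a bounded linear operator. -/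
open MeasureTheory Real Set

/-- Rotation by `θ` preserves the area. -/
lemma rot_mp_s5 (θ : ℝ) : MeasurePreserving
    (fun p : ℝ × ℝ => (p.1 * Real.cos θ - p.2 * Real.sin θ, p.1 * Real.sin θ + p.2 * Real.cos θ))
    volume volume := by
  refine ⟨by fun_prop, ?_⟩
  have hdet : LinearMap.det (Matrix.toLin (Module.Basis.finTwoProd ℝ) (Module.Basis.finTwoProd ℝ)
      !![Real.cos θ, -Real.sin θ; Real.sin θ, Real.cos θ]) = 1 := by
    rw [LinearMap.det_toLin, Matrix.det_fin_two_of]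
    nlinarith [Real.sin_sq_add_cos_sq θ]
  have h := Measure.map_linearMap_addHaar_eq_smul_addHaar (volume : Measure (ℝ × ℝ))
    (f := Matrix.toLin (Module.Basis.finTwoProd ℝ) (Module.Basis.finTwoProd ℝ)
      !![Real.cos θ, -Real.sin θ; Real.sin θ, Real.cos θ]) (by rw [hdet]; exact one_ne_zero)
  rw [hdet] at h
  simp only [inv_one, abs_one, ENNReal.ofReal_one, one_smul] at h
  convert h using 2
  ext p <;> simp [Matrix.toLin_finTwoProd_apply] <;> ring

/-- The parametrisation map of the lines. -/
noncomputable def lineMap (q : (ℝ × ℝ) × ℝ) : ℝ × ℝ :=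
  (q.1.1 * Real.cos q.1.2 - q.2 * Real.sin q.1.2, q.1.1 * Real.sin q.1.2 + q.2 * Real.cos q.1.2)

lemma lineMap_mp (ν : Measure ℝ) [IsFiniteMeasure ν] :
    MeasurePreserving lineMap (((volume : Measure ℝ).prod ν).prod volume)
      (ν univ • (volume : Measure (ℝ × ℝ))) := by
  have h1 : MeasurePreserving (fun q : ℝ × (ℝ × ℝ) => (q.1,
      ((q.2.1 * Real.cos q.1 - q.2.2 * Real.sin q.1,
        q.2.1 * Real.sin q.1 + q.2.2 * Real.cos q.1) : ℝ × ℝ)))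
      (ν.prod volume) (ν.prod volume) := by
    refine MeasurePreserving.skew_product (f := id) (g := fun (θ : ℝ) (p : ℝ × ℝ) =>
      ((p.1 * Real.cos θ - p.2 * Real.sin θ, p.1 * Real.sin θ + p.2 * Real.cos θ) : ℝ × ℝ))
      (MeasurePreserving.id ν) (by fun_prop) ?_
    exact Filter.Eventually.of_forall fun θ => (rot_mp_s5 θ).map_eq
  have h2 : MeasurePreserving (Prod.snd : ℝ × (ℝ × ℝ) → ℝ × ℝ) (ν.prod volume)
      (ν univ • (volume : Measure (ℝ × ℝ))) := ⟨measurable_snd, Measure.map_snd_prod⟩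
  have h3 : MeasurePreserving (Prod.map Prod.swap id : (ℝ × ℝ) × ℝ → (ℝ × ℝ) × ℝ)
      (((volume : Measure ℝ).prod ν).prod volume) ((ν.prod volume).prod volume) :=
    Measure.measurePreserving_swap.prod (MeasurePreserving.id _)
  have h4 := measurePreserving_prodAssoc ν (volume : Measure ℝ) (volume : Measure ℝ)
  exact h2.comp (h1.comp (h4.comp h3))

/-- Cauchy-Schwarz on a set of measure two. -/
lemma cs_two (g : ℝ → ℝ) (hg : Function.support g ⊆ Icc (-1) 1) :
    ‖∫ x, g x‖ₑ ^ 2 ≤ 2 * ∫⁻ x, ‖g x‖ₑ ^ 2 := by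
  by_cases hi : Integrable g
  · have hm : AEMeasurable (fun x => ‖g x‖ₑ) := hi.1.enorm
    have h1 : ‖∫ x, g x‖ₑ ≤ ∫⁻ x, ‖g x‖ₑ := enorm_integral_le_lintegral_enorm g
    have h2 : ∫⁻ x, ‖g x‖ₑ = ∫⁻ x in Icc (-1 : ℝ) 1, ‖g x‖ₑ := by
      rw [setLIntegral_eq_of_support_subset]
      intro x hx
      apply hg
      simpa using hx
    have h3 := ENNReal.lintegral_mul_le_Lp_mul_Lq (volume.restrict (Icc (-1 : ℝ) 1))
      Real.HolderConjugate.two_two hm.restrict (aemeasurable_const (b := (1 : ENNReal)))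
    simp only [Pi.mul_apply, mul_one, ENNReal.one_rpow, lintegral_const,
      Measure.restrict_apply MeasurableSet.univ, univ_inter, Real.volume_Icc] at h3
    calc ‖∫ x, g x‖ₑ ^ 2 ≤ (∫⁻ x in Icc (-1 : ℝ) 1, ‖g x‖ₑ) ^ 2 := by gcongr; rw [← h2]; exact h1
      _ ≤ _ := pow_le_pow_left' h3 2
      _ = (∫⁻ x in Icc (-1 : ℝ) 1, ‖g x‖ₑ ^ 2) * 2 := by
        rw [mul_pow, ← ENNReal.rpow_natCast, ← ENNReal.rpow_natCast, ← ENNReal.rpow_mul,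
          ← ENNReal.rpow_mul]
        norm_num
      _ ≤ 2 * ∫⁻ x, ‖g x‖ₑ ^ 2 := by
        rw [mul_comm]
        gcongr
        exact Measure.restrict_le_self
  · rw [integral_undef hi]; simp

/-- For every `f ∈ L²(Ω_D)` (extended by zero to `ℝ²`), the Radon
transform `Rf` belongs to `L²(Ω_S)` and `‖Rf‖_{L²(Ω_S)} ≤ 2√π · ‖f‖_{L²(Ω_D)}`;
hence `R : L²(Ω_D) → L²(Ω_S)` is a bounded linear operator. -/
theorem radon_bounded (f : ℝ × ℝ → ℝ) (hf : MemLp f 2 volume)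
    (hfsupp : Function.support f ⊆ unitDisk) :
    MemLp (fun p : ℝ × ℝ => radonT f p.1 p.2) 2 (volume.restrict sinoDom) ∧
      eLpNorm (fun p : ℝ × ℝ => radonT f p.1 p.2) 2 (volume.restrict sinoDom) ≤
        ENNReal.ofReal (2 * Real.sqrt π) * eLpNorm f 2 volume := by
  set ν : Measure ℝ := volume.restrict (Ico (0 : ℝ) (2 * π)) with hν
  have hνu : ν univ = ENNReal.ofReal (2 * π) := by simp [hν]
  have hG := lineMap_mp ν
  have hfm : AEStronglyMeasurable f (ν univ • (volume : Measure (ℝ × ℝ))) := hf.1.smul_measure _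
  have hcomp : AEStronglyMeasurable (fun q => f (lineMap q))
      (((volume : Measure ℝ).prod ν).prod volume) :=
    hfm.comp_measurePreserving hG
  have hRm : AEStronglyMeasurable (fun p : ℝ × ℝ => radonT f p.1 p.2)
      ((volume : Measure ℝ).prod ν) := hcomp.integral_prod_right'
  have hle : (volume : Measure (ℝ × ℝ)).restrict sinoDom ≤ (volume : Measure ℝ).prod ν := by
    rw [sinoDom, Measure.volume_eq_prod, ← Measure.prod_restrict]
    exact Measure.prod_mono Measure.restrict_le_self le_rfl
  have hpt : ∀ p : ℝ × ℝ, ‖radonT f p.1 p.2‖ₑ ^ 2 ≤ 2 * ∫⁻ σ, ‖f (lineMap (p, σ))‖ₑ ^ 2 := by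
    intro p
    refine cs_two (fun σ => f (lineMap (p, σ))) ?_
    intro σ hσ
    have h := hfsupp (show lineMap (p, σ) ∈ Function.support f from hσ)
    simp only [unitDisk, lineMap, mem_ofPred_eq] at h
    have hσ2 : σ ^ 2 ≤ 1 := by
      have e : (p.1 * Real.cos p.2 - σ * Real.sin p.2) ^ 2 +
          (p.1 * Real.sin p.2 + σ * Real.cos p.2) ^ 2 = p.1 ^ 2 + σ ^ 2 := by
        linear_combination (p.1 ^ 2 + σ ^ 2) * Real.sin_sq_add_cos_sq p.2
      nlinarith [sq_nonneg p.1]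
    exact abs_le.mp ((sq_le_one_iff_abs_le_one σ).mp hσ2)
  have hsq : ∫⁻ p, ‖radonT f p.1 p.2‖ₑ ^ 2 ∂((volume : Measure ℝ).prod ν)
      ≤ ENNReal.ofReal (4 * π) * ∫⁻ x, ‖f x‖ₑ ^ 2 := by
    calc _ ≤ ∫⁻ p, (2 * ∫⁻ σ : ℝ, ‖f (lineMap (p, σ))‖ₑ ^ 2) ∂((volume : Measure ℝ).prod ν) :=
          lintegral_mono hpt
      _ = 2 * ∫⁻ q, ‖f (lineMap q)‖ₑ ^ 2 ∂(((volume : Measure ℝ).prod ν).prod volume) := by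
          rw [lintegral_const_mul' _ _ (by simp), lintegral_prod _ (hcomp.enorm.pow_const 2)]
      _ = 2 * ∫⁻ x, ‖f x‖ₑ ^ 2 ∂(ν univ • (volume : Measure (ℝ × ℝ))) := by
          have hm : AEMeasurable (fun x => ‖f x‖ₑ ^ 2)
            (ν univ • (volume : Measure (ℝ × ℝ))) := hfm.enorm.pow_const 2
          rw [← hG.map_eq] at hm
          rw [← lintegral_map' hm hG.measurable.aemeasurable, hG.map_eq]
      _ = _ := by
          rw [lintegral_smul_measure, hνu, smul_eq_mul, ← mul_assoc]
          congr 1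
          rw [show (2 : ENNReal) = ENNReal.ofReal 2 by simp, ← ENNReal.ofReal_mul (by norm_num)]
          congr 1
          ring
  have hnorm : eLpNorm (fun p : ℝ × ℝ => radonT f p.1 p.2) 2 (volume.restrict sinoDom) ≤
        ENNReal.ofReal (2 * Real.sqrt π) * eLpNorm f 2 volume := by
    refine (eLpNorm_mono_measure _ hle).trans ?_
    rw [eLpNorm_eq_lintegral_rpow_enorm_toReal (by norm_num) (by norm_num),
      eLpNorm_eq_lintegral_rpow_enorm_toReal (by norm_num) (by norm_num)]
    simp only [ENNReal.toReal_ofNat, ENNReal.rpow_ofNat]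
    have hc : ENNReal.ofReal (2 * Real.sqrt π) = ENNReal.ofReal (4 * π) ^ (1 / 2 : ℝ) := by
      rw [ENNReal.ofReal_rpow_of_nonneg (by positivity) (by norm_num), ← Real.sqrt_eq_rpow,
        Real.sqrt_mul (by norm_num), show (4 : ℝ) = 2 ^ 2 by norm_num,
        Real.sqrt_sq (by norm_num)]
    rw [hc, ← ENNReal.mul_rpow_of_nonneg _ _ (by norm_num)]
    exact ENNReal.rpow_le_rpow hsq (by norm_num)
  exact ⟨⟨hRm.mono_measure hle,
    hnorm.trans_lt (ENNReal.mul_lt_top ENNReal.ofReal_lt_top hf.2)⟩, hnorm⟩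
end
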